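/- Fix k ≥ 1. For d ∈ ℕ let E^k_d (resp. O^k_d) be the number of paths P = (p₀, p₁, …, p_l) in D(k) of even length l (resp. odd length l), with arbitrary endpoints, consecutive entries distinct, and total distance d(P) = ∑_{i=1}^l d(p_{i−1}, p_i) equal to d (these counts are finite, since every step has distance at least 1). Then there exists n₀ such that for every integer n ≥ n₀: n^k · ∑_{p,q ∈ D(k)} W_{kn}(p,q) = ∑_{d=0}^∞ (E^k_d − O^k_d) · n^{−d}, with the series converging absolutely. -/

import Mathlib

open scoped BigOperators

/-- Non-crossing pair partitions of {1,…,2k}: fixed-point-free non-crossing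
involutions of `Fin (2*k)`. -/
def NCPair (k : ℕ) : Type :=
  {p : Equiv.Perm (Fin (2 * k)) //
    (∀ x, p (p x) = x) ∧ (∀ x, p x ≠ x) ∧
    ∀ a b c d : Fin (2 * k), a < b → b < c → c < d → p a = c → p b = d → False}

instance (k : ℕ) : Fintype (NCPair k) := by unfold NCPair; infer_instance

instance (k : ℕ) : DecidableEq (NCPair k) := by unfold NCPair; infer_instance

/-- `loops p q`: the number of loops obtained by closing the composed diagram,
i.e. the number of orbits of the subgroup generated by `p` and `q` on `Fin (2*k)`. -/
noncomputable def loops {k : ℕ} (p q : NCPair k) : ℕ :=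
  Nat.card (MulAction.orbitRel.Quotient
    (↥(Subgroup.closure ({p.1, q.1} : Set (Equiv.Perm (Fin (2 * k)))))) (Fin (2 * k)))

/-- The Gram matrix `G_{kn}(p,q) = n^{l(p,q)}`. -/
noncomputable def Gram (k n : ℕ) : Matrix (NCPair k) (NCPair k) ℝ :=
  fun p q => (n : ℝ) ^ loops p q

/-- The loop distance `d(p,q) = k - l(p,q)`. -/
noncomputable def loopDist {k : ℕ} (p q : NCPair k) : ℕ := k - loops p q

/-- The distance along a path P = (p₀,…,p_l): d(P) = ∑ d(p_{i-1}, p_i). -/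
noncomputable def pathDist {k l : ℕ} (P : Fin (l + 1) → NCPair k) : ℕ :=
  ∑ i : Fin l, loopDist (P i.castSucc) (P i.succ)

/-- Paths in D(k) (arbitrary endpoints, consecutive entries distinct) of
length of given parity and of total distance d. -/
def PathsOfDist (k : ℕ) (par : Bool) (d : ℕ) : Type :=
  {P : Σ l : ℕ, Fin (l + 1) → NCPair k //
    (∀ i : Fin P.1, P.2 i.castSucc ≠ P.2 i.succ) ∧
    (if par then Even P.1 else Odd P.1) ∧ pathDist P.2 = d}

/-- E^k_d : the number of even-length paths of distance d. -/
noncomputable def Ecount (k d : ℕ) : ℕ := Nat.card (PathsOfDist k true d)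

/-- O^k_d : the number of odd-length paths of distance d. -/
noncomputable def Ocount (k d : ℕ) : ℕ := Nat.card (PathsOfDist k false d)

/-!
Since `l(p, p) = k` and `l(p, q) < k` for `p ≠ q`, the Gram matrix factors as `n ^ k • (1 - A)`,
where `A` vanishes on the diagonal and has entries `-n⁻¹ ^ d(p, q)` off it. For large `n` the row
sums of `|A|` are below `1`, so `(1 - A)⁻¹` is the Neumann series of `A`, and expanding the powers
of `A` writes the sum of its entries as an absolutely convergent sum of weights over all paths. A
path of length `l` with distinct consecutive entries has weight `(-1) ^ l * n⁻¹ ^ d(P)` and every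
other path has weight `0`; collecting the paths by distance gives the series.
-/

open MulAction
open scoped Matrix

section Orbits

variable {α : Type*} [Finite α]

theorem natCard_quotient_lt_of_lt {r s : Setoid α} (h : r < s) :
    Nat.card (Quotient s) < Nat.card (Quotient r) := by
  have := Fintype.ofFinite (Quotient r)
  have := Fintype.ofFinite (Quotient s)
  let f : Quotient r → Quotient s := Quotient.map' id fun _ _ hab => h.le hab
  have f_surjective : Function.Surjective f := by
    rintro ⟨a⟩
    exact ⟨Quotient.mk r a, rfl⟩
  have f_not_injective : ¬ Function.Injective f := fun f_injective =>
    h.not_ge fun {a b} hab => Quotient.exact (f_injective (Quotient.sound hab :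
      f (Quotient.mk r a) = f (Quotient.mk r b)))
  simpa only [Nat.card_eq_fintype_card] using
    Fintype.card_lt_of_surjective_not_injective f f_surjective f_not_injective

theorem natCard_orbitRel_quotient_mul {G : Type*} [Group G] [MulAction G α] {m : ℕ}
    (h : ∀ x : α, (orbit G x).ncard = m) :
    Nat.card (orbitRel.Quotient G α) * m = Nat.card α := by
  have := Fintype.ofFinite (orbitRel.Quotient G α)
  rw [Nat.card_congr (selfEquivSigmaOrbits G α), Nat.card_sigma]
  simp only [Nat.card_coe_set_eq, h, Finset.sum_const, Finset.card_univ, smul_eq_mul,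
    Nat.card_eq_fintype_card]

end Orbits

theorem orbit_closure_singleton_of_involutive {α : Type*} {σ : Equiv.Perm α}
    (hσ : Function.Involutive σ) (x : α) :
    orbit (Subgroup.closure {σ}) x = {x, σ x} := by
  have hσσ : σ ^ (2 : ℤ) = 1 := Equiv.ext hσ
  rw [← Subgroup.zpowers_eq_closure]
  refine Set.Subset.antisymm ?_ (Set.insert_subset (mem_orbit_self x)
    (Set.singleton_subset_iff.2 ⟨⟨σ, Subgroup.mem_zpowers σ⟩, rfl⟩))
  rintro _ ⟨⟨_, m, rfl⟩, rfl⟩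
  rcases Int.even_or_odd' m with ⟨j, rfl | rfl⟩
  · left
    simp [Subgroup.smul_def, zpow_mul, hσσ]
  · right
    simp [Subgroup.smul_def, zpow_add, zpow_mul, hσσ]

section Loops

variable {k : ℕ} {p q : NCPair k}

theorem NCPair.orbit_closure_singleton (p : NCPair k) (x : Fin (2 * k)) :
    orbit (Subgroup.closure {p.1}) x = {x, p.1 x} :=
  orbit_closure_singleton_of_involutive p.2.1 x

theorem NCPair.natCard_orbits_closure_singleton (p : NCPair k) :
    Nat.card (orbitRel.Quotient (Subgroup.closure {p.1}) (Fin (2 * k))) = k := by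
  have h := natCard_orbitRel_quotient_mul (G := Subgroup.closure {p.1}) (m := 2) fun x => by
    rw [p.orbit_closure_singleton, Set.ncard_pair (p.2.2.1 x).symm]
  rw [Nat.card_fin] at h
  omega

theorem loops_self (p : NCPair k) : loops p p = k := by
  rw [loops, Set.pair_eq_singleton, p.natCard_orbits_closure_singleton]

-- Where `p x ≠ q x`, the point `q x` lies in the `⟨p, q⟩`-orbit of `x` but outside `{x, p x}`.
theorem loops_lt_of_ne (hpq : p ≠ q) : loops p q < k := by
  obtain ⟨x, hx⟩ : ∃ x, p.1 x ≠ q.1 x := by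
    by_contra! h
    exact hpq (Subtype.ext (Equiv.ext h))
  refine (natCard_quotient_lt_of_lt (lt_of_le_not_ge ?_ fun h => ?_)).trans_eq
    p.natCard_orbits_closure_singleton
  · rintro a b ⟨g, rfl⟩
    exact ⟨⟨g, Subgroup.closure_mono (by simp) g.2⟩, rfl⟩
  · have h_mem : q.1 x ∈ orbit (Subgroup.closure {p.1}) x :=
      h ⟨⟨q.1, Subgroup.subset_closure (by simp)⟩, rfl⟩
    rw [p.orbit_closure_singleton] at h_mem
    exact h_mem.elim (q.2.2.1 x) (Ne.symm hx)

theorem loops_le (p q : NCPair k) : loops p q ≤ k := by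
  rcases eq_or_ne p q with rfl | hpq
  · exact (loops_self p).le
  · exact (loops_lt_of_ne hpq).le

theorem loopDist_pos_of_ne (hpq : p ≠ q) : 0 < loopDist p q :=
  Nat.sub_pos_of_lt (loops_lt_of_ne hpq)

end Loops

section PathDist

variable {k : ℕ}

theorem length_le_pathDist {l : ℕ} {P : Fin (l + 1) → NCPair k}
    (hP : ∀ i : Fin l, P i.castSucc ≠ P i.succ) : l ≤ pathDist P := by
  calc l = ∑ _i : Fin l, 1 := by simp
    _ ≤ pathDist P := Finset.sum_le_sum fun i _ => loopDist_pos_of_ne (hP i)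

instance finite_pathsOfDist (par : Bool) (d : ℕ) : Finite (PathsOfDist k par d) := by
  refine Set.Finite.to_subtype (((Finset.range (d + 1)).sigma
    fun l => (Finset.univ : Finset (Fin (l + 1) → NCPair k))).finite_toSet.subset ?_)
  rintro ⟨l, P⟩ ⟨hP, -, rfl⟩
  simpa [Nat.lt_succ_iff] using length_le_pathDist hP

end PathDist

section PathWeight

variable {ι R : Type*}

/-- The weight `A(p₀, p₁) A(p₁, p₂) ⋯ A(p_{l-1}, p_l)` of a path `(p₀, …, p_l)`, whose sums over
paths are the entries of the powers of `A`. -/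
def pathWeight [CommMonoid R] (A : Matrix ι ι R) {l : ℕ} (P : Fin (l + 1) → ι) : R :=
  ∏ i : Fin l, A (P i.castSucc) (P i.succ)

theorem norm_pathWeight [NormedField R] (A : Matrix ι ι R) {l : ℕ} (P : Fin (l + 1) → ι) :
    ‖pathWeight A P‖ = pathWeight (A.map norm) P :=
  norm_prod _ _

theorem pathWeight_snoc [CommMonoid R] (A : Matrix ι ι R) {l : ℕ} (P : Fin (l + 1) → ι) (a : ι) :
    pathWeight A (Fin.snoc P a : Fin (l + 2) → ι) = pathWeight A P * A (P (Fin.last l)) a := by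
  simp only [pathWeight, Fin.prod_univ_castSucc, Fin.snoc_castSucc, Fin.succ_castSucc,
    Fin.succ_last, Fin.snoc_last]

variable [Fintype ι] [DecidableEq ι] [CommSemiring R]

theorem sum_pathWeight_mul_last (A : Matrix ι ι R) (l : ℕ) (g : ι → R) :
    ∑ P : Fin (l + 1) → ι, pathWeight A P * g (P (Fin.last l)) = ∑ p, ((A ^ l) *ᵥ g) p := by
  induction l generalizing g with
  | zero =>
    rw [← (Equiv.funUnique (Fin 1) ι).symm.sum_comp]
    simp [pathWeight]
  | succ l ih =>
    calc ∑ P : Fin (l + 2) → ι, pathWeight A P * g (P (Fin.last (l + 1)))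
      _ = ∑ P : Fin (l + 1) → ι, ∑ a, pathWeight A P * (A (P (Fin.last l)) a * g a) := by
        rw [← (Fin.snocEquiv fun _ : Fin (l + 2) => ι).sum_comp, Fintype.sum_prod_type_right]
        simp only [Fin.snocEquiv, Equiv.coe_fn_mk, pathWeight_snoc, Fin.snoc_last, mul_assoc]
      _ = ∑ P : Fin (l + 1) → ι, pathWeight A P * (A *ᵥ g) (P (Fin.last l)) := by
        simp only [Matrix.mulVec, dotProduct, Finset.mul_sum]
      _ = ∑ p, ((A ^ (l + 1)) *ᵥ g) p := by
        rw [ih, Matrix.mulVec_mulVec, pow_succ]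

theorem sum_pathWeight (A : Matrix ι ι R) (l : ℕ) :
    ∑ P : Fin (l + 1) → ι, pathWeight A P = ∑ p, ∑ q, (A ^ l) p q := by
  simpa [Matrix.mulVec, dotProduct] using sum_pathWeight_mul_last A l 1

end PathWeight

section NeumannSeries

open scoped Matrix.Norms.Operator

theorem linfty_opNorm_lt_one {ι E : Type*} [Fintype ι] [SeminormedAddCommGroup E]
    {A : Matrix ι ι E} (hA : ∀ p, ∑ q, ‖A p q‖ < 1) : ‖A‖ < 1 := by
  rw [Matrix.linfty_opNorm_def, ← NNReal.coe_one, NNReal.coe_lt_coe, Finset.sup_lt_iff one_pos]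
  exact fun p _ => by simpa [← NNReal.coe_lt_coe] using hA p

variable {ι R : Type*} [Fintype ι] [DecidableEq ι] [NormedCommRing R] [CompleteSpace R]

-- Instance search does not see that the operator norm induces the entrywise uniform structure.
instance hasSummableGeomSeries_matrix : HasSummableGeomSeries (Matrix ι ι R) :=
  have : CompleteSpace (Matrix ι ι R) := Matrix.instCompleteSpace ι ι R
  @instHasSummableGeomSeriesOfCompleteSpace _ _ this

variable {A : Matrix ι ι R}

theorem isUnit_det_one_sub (hA : ∀ p, ∑ q, ‖A p q‖ < 1) : IsUnit (1 - A).det :=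
  (Matrix.isUnit_iff_isUnit_det _).1 (isUnit_one_sub_of_norm_lt_one (linfty_opNorm_lt_one hA))

theorem hasSum_pow_apply_one_sub_inv (hA : ∀ p, ∑ q, ‖A p q‖ < 1) (p q : ι) :
    HasSum (fun l : ℕ => (A ^ l) p q) ((1 - A)⁻¹ p q) := by
  have h_summable : Summable (A ^ · : ℕ → Matrix ι ι R) :=
    summable_geometric_of_norm_lt_one (linfty_opNorm_lt_one hA)
  rw [Matrix.inv_eq_left_inv h_summable.tsum_pow_mul_one_sub]
  exact Pi.hasSum.1 (Pi.hasSum.1 h_summable.hasSum p) q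

theorem hasSum_sum_pow_apply (hA : ∀ p, ∑ q, ‖A p q‖ < 1) :
    HasSum (fun l : ℕ => ∑ p, ∑ q, (A ^ l) p q) (∑ p, ∑ q, (1 - A)⁻¹ p q) :=
  hasSum_sum fun p _ => hasSum_sum fun q _ => hasSum_pow_apply_one_sub_inv hA p q

end NeumannSeries

section PathExpansion

variable {ι 𝕜 : Type*} [Fintype ι] [NormedField 𝕜] {A : Matrix ι ι 𝕜}

theorem summable_norm_pathWeight (hA : ∀ p, ∑ q, ‖A p q‖ < 1) :
    Summable fun P : Σ l : ℕ, Fin (l + 1) → ι => ‖pathWeight A P.2‖ := by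
  classical
  refine (summable_sigma_of_nonneg fun _ => norm_nonneg _).2 ⟨fun _ => Summable.of_finite, ?_⟩
  simp only [tsum_fintype, norm_pathWeight, sum_pathWeight]
  exact (hasSum_sum_pow_apply (A := A.map norm) (by simpa using hA)).summable

theorem hasSum_pathWeight [DecidableEq ι] [CompleteSpace 𝕜] (hA : ∀ p, ∑ q, ‖A p q‖ < 1) :
    HasSum (fun P : Σ l : ℕ, Fin (l + 1) → ι => pathWeight A P.2) (∑ p, ∑ q, (1 - A)⁻¹ p q) := by
  have h_paths := (summable_norm_pathWeight hA).of_norm.hasSum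
  have h_lengths := h_paths.sigma fun _ => hasSum_fintype _
  simp only [sum_pathWeight] at h_lengths
  rwa [h_lengths.unique (hasSum_sum_pow_apply hA)] at h_paths

end PathExpansion

section GramDefect

/-- The matrix `A` in the factorization `G = n ^ k • (1 - A)` of the Gram matrix, at `x = n⁻¹`. -/
noncomputable def gramDefect (k : ℕ) (x : ℝ) : Matrix (NCPair k) (NCPair k) ℝ :=
  fun p q => if p = q then 0 else -x ^ loopDist p q

variable {k : ℕ} {x : ℝ}

theorem gram_eq_smul_one_sub_gramDefect {n : ℕ} (hn : n ≠ 0) :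
    Gram k n = (n : ℝ) ^ k • (1 - gramDefect k (n : ℝ)⁻¹) := by
  ext p q
  rcases eq_or_ne p q with rfl | hpq
  · simp [Gram, gramDefect, loops_self]
  · have n_ne_zero : (n : ℝ) ≠ 0 := Nat.cast_ne_zero.2 hn
    simp only [Gram, gramDefect, loopDist, Matrix.smul_apply, Matrix.sub_apply,
      Matrix.one_apply_ne hpq, if_neg hpq, zero_sub, neg_neg, smul_eq_mul, inv_pow]
    rw [← pow_sub₀ _ n_ne_zero (Nat.sub_le _ _), Nat.sub_sub_self (loops_le p q)]

theorem sum_norm_gramDefect_lt_one (hx : Fintype.card (NCPair k) * |x| < 1) (p : NCPair k) :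
    ∑ q, ‖gramDefect k x p q‖ < 1 := by
  have one_le_card : (1 : ℝ) ≤ Fintype.card (NCPair k) := by
    exact_mod_cast Fintype.card_pos_iff.2 ⟨p⟩
  have abs_x_le_one : |x| ≤ 1 := by nlinarith [abs_nonneg x]
  have norm_le (q : NCPair k) : ‖gramDefect k x p q‖ ≤ |x| := by
    unfold gramDefect
    split_ifs with hpq
    · simp
    · simpa using pow_le_of_le_one (abs_nonneg x) abs_x_le_one (loopDist_pos_of_ne hpq).ne'
  calc ∑ q, ‖gramDefect k x p q‖ ≤ ∑ _q : NCPair k, |x| := Finset.sum_le_sum fun q _ => norm_le q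
    _ = Fintype.card (NCPair k) * |x| := by simp
    _ < 1 := hx

theorem pathWeight_gramDefect {l : ℕ} {P : Fin (l + 1) → NCPair k}
    (hP : ∀ i : Fin l, P i.castSucc ≠ P i.succ) :
    pathWeight (gramDefect k x) P = (-1) ^ l * x ^ pathDist P := by
  simp [pathWeight, gramDefect, hP, Finset.prod_neg, pathDist, Finset.prod_pow_eq_pow_sum]

theorem pathWeight_gramDefect_eq_zero {l : ℕ} {P : Fin (l + 1) → NCPair k} {i : Fin l}
    (hi : P i.castSucc = P i.succ) : pathWeight (gramDefect k x) P = 0 :=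
  Finset.prod_eq_zero (Finset.mem_univ i) (if_pos hi)

end GramDefect

section PathCount

variable {k : ℕ} {x : ℝ}

/-- Forgets the distance `d` and the parity of a path counted by `E^k_d` or `O^k_d`. -/
def pathOfDistParity (P : Σ d : ℕ, Σ par : Bool, PathsOfDist k par d) :
    Σ l : ℕ, Fin (l + 1) → NCPair k :=
  P.2.2.1

theorem pathOfDistParity_injective : Function.Injective (pathOfDistParity (k := k)) := by
  rintro ⟨d, par, P, hP, h_par, rfl⟩ ⟨d', par', P', hP', h_par', rfl⟩ (rfl : P = P')
  obtain rfl : par = par' := by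
    cases par <;> cases par' <;> simp_all [← Nat.not_even_iff_odd]
  rfl

theorem mem_range_pathOfDistParity {P : Σ l : ℕ, Fin (l + 1) → NCPair k}
    (hP : ∀ i : Fin P.1, P.2 i.castSucc ≠ P.2 i.succ) : P ∈ Set.range pathOfDistParity := by
  rcases Nat.even_or_odd P.1 with h_even | h_odd
  · exact ⟨⟨_, true, P, hP, h_even, rfl⟩, rfl⟩
  · exact ⟨⟨_, false, P, hP, h_odd, rfl⟩, rfl⟩

theorem pathWeight_pathOfDistParity (d : ℕ) (par : Bool) (P : PathsOfDist k par d) :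
    pathWeight (gramDefect k x) (pathOfDistParity ⟨d, par, P⟩).2 =
      (if par then 1 else -1) * x ^ d := by
  obtain ⟨P, hP, h_par, rfl⟩ := P
  rw [pathOfDistParity, pathWeight_gramDefect hP]
  cases par
  · simp [Odd.neg_one_pow h_par]
  · simp [Even.neg_one_pow h_par]

theorem hasSum_Ecount_sub_Ocount (hx : Fintype.card (NCPair k) * |x| < 1) :
    HasSum (fun d : ℕ => ((Ecount k d : ℝ) - Ocount k d) * x ^ d)
      (∑ p, ∑ q, (1 - gramDefect k x)⁻¹ p q) := by
  have h_paths := hasSum_pathWeight (sum_norm_gramDefect_lt_one hx)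
  have h_weight_zero : ∀ P ∉ Set.range (pathOfDistParity (k := k)),
      pathWeight (gramDefect k x) P.2 = 0 := by
    intro P hP
    obtain ⟨i, hi⟩ := not_forall_not.1 (mt mem_range_pathOfDistParity hP)
    exact pathWeight_gramDefect_eq_zero hi
  rw [← pathOfDistParity_injective.hasSum_iff h_weight_zero] at h_paths
  refine h_paths.sigma fun d => ?_
  have (par : Bool) := Fintype.ofFinite (PathsOfDist k par d)
  have h_distance : ∑ P : Σ par : Bool, PathsOfDist k par d,
      pathWeight (gramDefect k x) (pathOfDistParity ⟨d, P⟩).2 =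
        ((Ecount k d : ℝ) - Ocount k d) * x ^ d := by
    simp only [Fintype.sum_sigma, Fintype.sum_bool, pathWeight_pathOfDistParity,
      Finset.sum_const, Finset.card_univ, nsmul_eq_mul, Ecount, Ocount, Nat.card_eq_fintype_card,
      Bool.false_eq_true, if_true, if_false]
    ring
  rw [← h_distance]
  exact hasSum_fintype _

end PathCount

/-- The counts E^k_d, O^k_d are finite and, for n large enough, the moments of
n^{1/2} u₁₁ admit the absolutely convergent expansion
n^k ∑_{p,q} W_{kn}(p,q) = ∑_{d=0}^∞ (E^k_d − O^k_d) n^{−d}. -/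
theorem moment_path_series (k : ℕ) (hk : 1 ≤ k) :
    (∀ par : Bool, ∀ d : ℕ, Finite (PathsOfDist k par d)) ∧
    ∃ n₀ : ℕ, ∀ n : ℕ, n₀ ≤ n →
      Summable (fun d : ℕ => |((Ecount k d : ℝ) - Ocount k d) * ((n : ℝ)⁻¹) ^ d|) ∧
      (n : ℝ) ^ k * ∑ p : NCPair k, ∑ q : NCPair k, (Gram k n)⁻¹ p q
        = ∑' d : ℕ, ((Ecount k d : ℝ) - Ocount k d) * ((n : ℝ)⁻¹) ^ d := by
  refine ⟨finite_pathsOfDist, Fintype.card (NCPair k) + 1, fun n hn => ?_⟩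
  have hn_pos : (0 : ℝ) < n := by exact_mod_cast Nat.zero_lt_of_lt hn
  have hx : Fintype.card (NCPair k) * |(n : ℝ)⁻¹| < 1 := by
    rw [abs_of_pos (inv_pos.2 hn_pos), ← div_eq_mul_inv, div_lt_one hn_pos]
    exact_mod_cast hn
  have h_series := hasSum_Ecount_sub_Ocount hx
  refine ⟨h_series.summable.abs, ?_⟩
  have h_inv : (Gram k n)⁻¹ = ((n : ℝ) ^ k)⁻¹ • (1 - gramDefect k (n : ℝ)⁻¹)⁻¹ := by
    have h_unit := isUnit_det_one_sub (sum_norm_gramDefect_lt_one hx)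
    rw [gram_eq_smul_one_sub_gramDefect (Nat.ne_zero_of_lt hn)]
    exact Matrix.inv_smul' _ (Units.mk0 _ (pow_ne_zero k hn_pos.ne')) h_unit
  rw [h_series.tsum_eq, h_inv]
  simp only [Matrix.smul_apply, smul_eq_mul, ← Finset.mul_sum]
  exact mul_inv_cancel_left₀ (pow_ne_zero k hn_pos.ne') _
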